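/- arXiv:math/0301022 — 4 statements merged into one kernel-verified Lean document; each statement's English description precedes it below -/
import Mathlib

section
/- For every real h, the 5×5 real matrices X = -E13 - 2h·E15 + E24 + 2E35, V+ = (1/2)E12 + (h/4)E14 - (1/2)E23 - (h/2)E25 - (1/2)E34 - E45, H = E11 - h²E15 + (1/2)E22 + (h/2)E24 + 2h·E35 - (1/2)E44 - E55, V- = -(5h²/16)E14 - E21 - (h/4)E23 - (h²/8)E25 - (1/2)E32 + (3h/4)E34 + (1/2)E43 + h·E45 - (1/2)E54, Y = (5h²/8)E13 + (5h³/4)E15 - (h/2)E22 - (3h²/4)E24 - 2E31 - 2h·E33 - (13h²/4)E35 + E42 + (h/2)E44 + E53 + 2h·E55 satisfy all defining relations of U_h(osp(2/1)); here X³ = 0, so sinh(hX) = hX and cosh(hX) = I + (h²/2)X². (This is the adjoint representation of U_h(osp(2/1)) obtained by the first deformation map.) -/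
open Matrix

theorem ext5 {a00 a01 a02 a03 a04
    a10 a11 a12 a13 a14
    a20 a21 a22 a23 a24
    a30 a31 a32 a33 a34
    a40 a41 a42 a43 a44
    b00 b01 b02 b03 b04
    b10 b11 b12 b13 b14
    b20 b21 b22 b23 b24
    b30 b31 b32 b33 b34
    b40 b41 b42 b43 b44 : ℝ}
    (h00 : a00 = b00) (h01 : a01 = b01) (h02 : a02 = b02) (h03 : a03 = b03) (h04 : a04 = b04)
    (h10 : a10 = b10) (h11 : a11 = b11) (h12 : a12 = b12) (h13 : a13 = b13) (h14 : a14 = b14)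
    (h20 : a20 = b20) (h21 : a21 = b21) (h22 : a22 = b22) (h23 : a23 = b23) (h24 : a24 = b24)
    (h30 : a30 = b30) (h31 : a31 = b31) (h32 : a32 = b32) (h33 : a33 = b33) (h34 : a34 = b34)
    (h40 : a40 = b40) (h41 : a41 = b41) (h42 : a42 = b42) (h43 : a43 = b43) (h44 : a44 = b44) :
    !![a00, a01, a02, a03, a04;
      a10, a11, a12, a13, a14;
      a20, a21, a22, a23, a24;
      a30, a31, a32, a33, a34;
      a40, a41, a42, a43, a44] =
    (!![b00, b01, b02, b03, b04;
      b10, b11, b12, b13, b14;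
      b20, b21, b22, b23, b24;
      b30, b31, b32, b33, b34;
      b40, b41, b42, b43, b44] : Matrix (Fin 5) (Fin 5) ℝ) := by
  rw [h00, h01, h02, h03, h04, h10, h11, h12, h13, h14, h20, h21, h22, h23, h24, h30, h31, h32, h33, h34, h40, h41, h42, h43, h44]

theorem mul5 (a00 a01 a02 a03 a04
    a10 a11 a12 a13 a14
    a20 a21 a22 a23 a24
    a30 a31 a32 a33 a34
    a40 a41 a42 a43 a44
    b00 b01 b02 b03 b04
    b10 b11 b12 b13 b14
    b20 b21 b22 b23 b24
    b30 b31 b32 b33 b34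
    b40 b41 b42 b43 b44 : ℝ) :
    !![a00, a01, a02, a03, a04;
      a10, a11, a12, a13, a14;
      a20, a21, a22, a23, a24;
      a30, a31, a32, a33, a34;
      a40, a41, a42, a43, a44] *
    !![b00, b01, b02, b03, b04;
      b10, b11, b12, b13, b14;
      b20, b21, b22, b23, b24;
      b30, b31, b32, b33, b34;
      b40, b41, b42, b43, b44] =
    (!![a00 * b00 + a01 * b10 + a02 * b20 + a03 * b30 + a04 * b40, a00 * b01 + a01 * b11 + a02 * b21 + a03 * b31 + a04 * b41, a00 * b02 + a01 * b12 + a02 * b22 + a03 * b32 + a04 * b42, a00 * b03 + a01 * b13 + a02 * b23 + a03 * b33 + a04 * b43, a00 * b04 + a01 * b14 + a02 * b24 + a03 * b34 + a04 * b44;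
      a10 * b00 + a11 * b10 + a12 * b20 + a13 * b30 + a14 * b40, a10 * b01 + a11 * b11 + a12 * b21 + a13 * b31 + a14 * b41, a10 * b02 + a11 * b12 + a12 * b22 + a13 * b32 + a14 * b42, a10 * b03 + a11 * b13 + a12 * b23 + a13 * b33 + a14 * b43, a10 * b04 + a11 * b14 + a12 * b24 + a13 * b34 + a14 * b44;
      a20 * b00 + a21 * b10 + a22 * b20 + a23 * b30 + a24 * b40, a20 * b01 + a21 * b11 + a22 * b21 + a23 * b31 + a24 * b41, a20 * b02 + a21 * b12 + a22 * b22 + a23 * b32 + a24 * b42, a20 * b03 + a21 * b13 + a22 * b23 + a23 * b33 + a24 * b43, a20 * b04 + a21 * b14 + a22 * b24 + a23 * b34 + a24 * b44;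
      a30 * b00 + a31 * b10 + a32 * b20 + a33 * b30 + a34 * b40, a30 * b01 + a31 * b11 + a32 * b21 + a33 * b31 + a34 * b41, a30 * b02 + a31 * b12 + a32 * b22 + a33 * b32 + a34 * b42, a30 * b03 + a31 * b13 + a32 * b23 + a33 * b33 + a34 * b43, a30 * b04 + a31 * b14 + a32 * b24 + a33 * b34 + a34 * b44;
      a40 * b00 + a41 * b10 + a42 * b20 + a43 * b30 + a44 * b40, a40 * b01 + a41 * b11 + a42 * b21 + a43 * b31 + a44 * b41, a40 * b02 + a41 * b12 + a42 * b22 + a43 * b32 + a44 * b42, a40 * b03 + a41 * b13 + a42 * b23 + a43 * b33 + a44 * b43, a40 * b04 + a41 * b14 + a42 * b24 + a43 * b34 + a44 * b44] : Matrix (Fin 5) (Fin 5) ℝ) := by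
  ext i j
  fin_cases i <;> fin_cases j <;> simp [Matrix.mul_apply, Fin.sum_univ_five]

theorem add5 (a00 a01 a02 a03 a04
    a10 a11 a12 a13 a14
    a20 a21 a22 a23 a24
    a30 a31 a32 a33 a34
    a40 a41 a42 a43 a44
    b00 b01 b02 b03 b04
    b10 b11 b12 b13 b14
    b20 b21 b22 b23 b24
    b30 b31 b32 b33 b34
    b40 b41 b42 b43 b44 : ℝ) :
    !![a00, a01, a02, a03, a04;
      a10, a11, a12, a13, a14;
      a20, a21, a22, a23, a24;
      a30, a31, a32, a33, a34;
      a40, a41, a42, a43, a44] +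
    !![b00, b01, b02, b03, b04;
      b10, b11, b12, b13, b14;
      b20, b21, b22, b23, b24;
      b30, b31, b32, b33, b34;
      b40, b41, b42, b43, b44] =
    (!![a00 + b00, a01 + b01, a02 + b02, a03 + b03, a04 + b04;
      a10 + b10, a11 + b11, a12 + b12, a13 + b13, a14 + b14;
      a20 + b20, a21 + b21, a22 + b22, a23 + b23, a24 + b24;
      a30 + b30, a31 + b31, a32 + b32, a33 + b33, a34 + b34;
      a40 + b40, a41 + b41, a42 + b42, a43 + b43, a44 + b44] : Matrix (Fin 5) (Fin 5) ℝ) := by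
  ext i j
  fin_cases i <;> fin_cases j <;> rfl

theorem sub5 (a00 a01 a02 a03 a04
    a10 a11 a12 a13 a14
    a20 a21 a22 a23 a24
    a30 a31 a32 a33 a34
    a40 a41 a42 a43 a44
    b00 b01 b02 b03 b04
    b10 b11 b12 b13 b14
    b20 b21 b22 b23 b24
    b30 b31 b32 b33 b34
    b40 b41 b42 b43 b44 : ℝ) :
    !![a00, a01, a02, a03, a04;
      a10, a11, a12, a13, a14;
      a20, a21, a22, a23, a24;
      a30, a31, a32, a33, a34;
      a40, a41, a42, a43, a44] -
    !![b00, b01, b02, b03, b04;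
      b10, b11, b12, b13, b14;
      b20, b21, b22, b23, b24;
      b30, b31, b32, b33, b34;
      b40, b41, b42, b43, b44] =
    (!![a00 - b00, a01 - b01, a02 - b02, a03 - b03, a04 - b04;
      a10 - b10, a11 - b11, a12 - b12, a13 - b13, a14 - b14;
      a20 - b20, a21 - b21, a22 - b22, a23 - b23, a24 - b24;
      a30 - b30, a31 - b31, a32 - b32, a33 - b33, a34 - b34;
      a40 - b40, a41 - b41, a42 - b42, a43 - b43, a44 - b44] : Matrix (Fin 5) (Fin 5) ℝ) := by
  ext i j
  fin_cases i <;> fin_cases j <;> rfl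

theorem smul5 (c a00 a01 a02 a03 a04
    a10 a11 a12 a13 a14
    a20 a21 a22 a23 a24
    a30 a31 a32 a33 a34
    a40 a41 a42 a43 a44 : ℝ) :
    c • (!![a00, a01, a02, a03, a04;
      a10, a11, a12, a13, a14;
      a20, a21, a22, a23, a24;
      a30, a31, a32, a33, a34;
      a40, a41, a42, a43, a44] : Matrix (Fin 5) (Fin 5) ℝ) =
    !![c * a00, c * a01, c * a02, c * a03, c * a04;
      c * a10, c * a11, c * a12, c * a13, c * a14;
      c * a20, c * a21, c * a22, c * a23, c * a24;
      c * a30, c * a31, c * a32, c * a33, c * a34;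
      c * a40, c * a41, c * a42, c * a43, c * a44] := by
  ext i j
  fin_cases i <;> fin_cases j <;> rfl

theorem neg5 (a00 a01 a02 a03 a04
    a10 a11 a12 a13 a14
    a20 a21 a22 a23 a24
    a30 a31 a32 a33 a34
    a40 a41 a42 a43 a44 : ℝ) :
    - (!![a00, a01, a02, a03, a04;
      a10, a11, a12, a13, a14;
      a20, a21, a22, a23, a24;
      a30, a31, a32, a33, a34;
      a40, a41, a42, a43, a44] : Matrix (Fin 5) (Fin 5) ℝ) =
    !![-a00, -a01, -a02, -a03, -a04;
      -a10, -a11, -a12, -a13, -a14;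
      -a20, -a21, -a22, -a23, -a24;
      -a30, -a31, -a32, -a33, -a34;
      -a40, -a41, -a42, -a43, -a44] := by
  ext i j
  fin_cases i <;> fin_cases j <;> rfl

theorem zero5 : (0 : Matrix (Fin 5) (Fin 5) ℝ) =
    !![0, 0, 0, 0, 0;
      0, 0, 0, 0, 0;
      0, 0, 0, 0, 0;
      0, 0, 0, 0, 0;
      0, 0, 0, 0, 0] := by
  ext i j
  fin_cases i <;> fin_cases j <;> rfl

theorem one5 : (1 : Matrix (Fin 5) (Fin 5) ℝ) =
    !![1, 0, 0, 0, 0;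
      0, 1, 0, 0, 0;
      0, 0, 1, 0, 0;
      0, 0, 0, 1, 0;
      0, 0, 0, 0, 1] := by
  ext i j
  fin_cases i <;> fin_cases j <;> simp

set_option maxHeartbeats 4000000 in
/-- The adjoint representation of `U_h(osp(2/1))` obtained by the first deformation
map: for every real `h` the given 5×5 matrices satisfy all defining relations of
`U_h(osp(2/1))` (here `X³ = 0`, so `sinh(hX) = hX` and `cosh(hX) = I + (h²/2)X²`). -/
theorem stmt_6 (h : ℝ) (X Vp H Vm Y : Matrix (Fin 5) (Fin 5) ℝ)
    (hX : X = !![0, 0, -1, 0, -2*h;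
                 0, 0, 0, 1, 0;
                 0, 0, 0, 0, 2;
                 0, 0, 0, 0, 0;
                 0, 0, 0, 0, 0])
    (hVp : Vp = !![0, 1/2, 0, h/4, 0;
                   0, 0, -(1/2), 0, -(h/2);
                   0, 0, 0, -(1/2), 0;
                   0, 0, 0, 0, -1;
                   0, 0, 0, 0, 0])
    (hH : H = !![1, 0, 0, 0, -h^2;
                 0, 1/2, 0, h/2, 0;
                 0, 0, 0, 0, 2*h;
                 0, 0, 0, -(1/2), 0;
                 0, 0, 0, 0, -1])
    (hVm : Vm = !![0, 0, 0, -(5*h^2/16), 0;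
                   -1, 0, -(h/4), 0, -(h^2/8);
                   0, -(1/2), 0, 3*h/4, 0;
                   0, 0, 1/2, 0, h;
                   0, 0, 0, -(1/2), 0])
    (hY : Y = !![0, 0, 5*h^2/8, 0, 5*h^3/4;
                 0, -(h/2), 0, -(3*h^2/4), 0;
                 -2, 0, -2*h, 0, -(13*h^2/4);
                 0, 1, 0, h/2, 0;
                 0, 0, 1, 0, 2*h]) :
    let C : Matrix (Fin 5) (Fin 5) ℝ := 1 + (h^2/2) • (X * X)
    X * X * X = 0 ∧
    H * Vp - Vp * H = (1/2 : ℝ) • (Vp * C) ∧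
    H * Vm - Vm * H = -((1/4 : ℝ) • (Vm * C + C * Vm)) ∧
    Vp * Vm + Vm * Vp = -((1/2 : ℝ) • H) ∧
    H * X - X * H = X ∧
    H * Y - Y * H = -((1/2 : ℝ) • (Y * C + C * Y))
      + h^2 • (Vm * X * Vp) - h^2 • (Vp * X * Vm) ∧
    X * Y - Y * X = (2 : ℝ) • H ∧
    Vp * Vp = (1/4 : ℝ) • X ∧
    Vm * Vm = -((1/4 : ℝ) • Y) ∧
    X * Vp - Vp * X = 0 ∧
    Y * Vm - Vm * Y = 0 ∧
    X * Vm - Vm * X = Vp ∧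
    Y * Vp - Vp * Y = (1/2 : ℝ) • (Vm * C + C * Vm) := by
  intro C
  have hC : C = !![1, 0, 0, 0, -h^2;
                   0, 1, 0, 0, 0;
                   0, 0, 1, 0, 0;
                   0, 0, 0, 1, 0;
                   0, 0, 0, 0, 1] := by
    simp only [C, hX, one5, mul5, smul5, add5]
    apply ext5 <;> ring
  clear_value C
  subst hX hVp hH hVm hY hC
  refine ⟨?_, ?_, ?_, ?_, ?_, ?_, ?_, ?_, ?_, ?_, ?_, ?_, ?_⟩ <;>
    (simp only [mul5, add5, sub5, smul5, neg5, zero5]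
     apply ext5 <;> ring)
end

section
/- Let h be real and J real with 1 - 2hJ > 0 and J ≠ 0, and set f1 = (1 - 2hJ)^(-1/4). Then: (i) hJ·f1² + sqrt(1 + h²J²f1⁴) = (1 - 2hJ)^(-1/2); (ii) the solution formulas give f2 := sqrt(1 + h²J²f1⁴)·f1/(f1 + 2J·f1') = (1 - 2hJ)^(1/2) (where f1' = (h/2)(1 - 2hJ)^(-5/4)), f3 := 1/f1 = (1 - 2hJ)^(1/4), w := (1 - f2)/(J·f1) = 2h(1 - 2hJ)^(1/4)/(1 + (1 - 2hJ)^(1/2)), and u := -(1/4)w + (1/2)(f1'/f1²)f2 = (h/4)(1 - 2hJ)^(-1/4)·(1 - (1 - 2hJ)^(1/2))/(1 + (1 - 2hJ)^(1/2)). (Equivalently, with σ = -log(1 - 2hJ): T = e^(σ/2), f2 = e^(-σ/2), f3 = e^(-σ/4), w = h/cosh(σ/4), u = (h/4)e^(σ/4)tanh(σ/4), which is the first deformation map of U_h(osp(2/1)).) -/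
/-- The first deformation map of `U_h(osp(2/1))`: for `f1 = (1 - 2hJ)^(-1/4)` the
quantity `T = hJ·f1² + √(1 + h²J²f1⁴)` equals `(1 - 2hJ)^(-1/2)`, and the solution
formulas give `f2 = (1 - 2hJ)^(1/2)`, `f3 = (1 - 2hJ)^(1/4)`,
`w = 2h(1 - 2hJ)^(1/4)/(1 + (1 - 2hJ)^(1/2))` and
`u = (h/4)(1 - 2hJ)^(-1/4)(1 - (1 - 2hJ)^(1/2))/(1 + (1 - 2hJ)^(1/2))`. -/
theorem stmt_10 (h J : ℝ) (hpos : 1 - 2*h*J > 0) (hJ : J ≠ 0) :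
    let f1 : ℝ := (1 - 2*h*J) ^ (-(1/4) : ℝ)
    let f1' : ℝ := (h/2) * (1 - 2*h*J) ^ (-(5/4) : ℝ)
    let f2 : ℝ := Real.sqrt (1 + h^2 * J^2 * f1^4) * f1 / (f1 + 2*J*f1')
    let f3 : ℝ := 1 / f1
    let w : ℝ := (1 - f2) / (J * f1)
    let u : ℝ := -(1/4) * w + (1/2) * (f1' / f1^2) * f2
    h*J*f1^2 + Real.sqrt (1 + h^2 * J^2 * f1^4) = (1 - 2*h*J) ^ (-(1/2) : ℝ) ∧
    f2 = (1 - 2*h*J) ^ ((1/2) : ℝ) ∧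
    f3 = (1 - 2*h*J) ^ ((1/4) : ℝ) ∧
    w = 2*h*(1 - 2*h*J) ^ ((1/4) : ℝ) / (1 + (1 - 2*h*J) ^ ((1/2) : ℝ)) ∧
    u = (h/4) * (1 - 2*h*J) ^ (-(1/4) : ℝ) * (1 - (1 - 2*h*J) ^ ((1/2) : ℝ))
          / (1 + (1 - 2*h*J) ^ ((1/2) : ℝ)) := by
  intro f1 f1' f2 f3 w u
  obtain ⟨a, ha⟩ : ∃ a, a = (1 - 2*h*J) ^ ((1/4) : ℝ) := ⟨_, rfl⟩
  have ha0 : 0 < a := by rw [ha]; exact Real.rpow_pos_of_pos hpos _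
  have hane : a ≠ 0 := ha0.ne'
  have key : ∀ n : ℕ, (1 - 2*h*J) ^ ((n:ℝ)/4) = a ^ n := by
    intro n
    rw [ha, ← Real.rpow_natCast, ← Real.rpow_mul hpos.le]
    congr 1; ring
  have keyn : ∀ n : ℕ, (1 - 2*h*J) ^ (-((n:ℝ)/4)) = (a ^ n)⁻¹ := by
    intro n
    rw [Real.rpow_neg hpos.le, key]
  have h4 : 1 - 2*h*J = a^4 := by
    rw [← key 4]; norm_num
  have h2 : (1 - 2*h*J) ^ ((1/2) : ℝ) = a^2 := by
    rw [← key 2]; norm_num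
  have hn2 : (1 - 2*h*J) ^ (-(1/2) : ℝ) = (a^2)⁻¹ := by
    rw [← keyn 2]; norm_num
  have hn1 : (1 - 2*h*J) ^ (-(1/4) : ℝ) = a⁻¹ := by
    rw [← pow_one a, ← keyn 1]; norm_num
  have hn5 : (1 - 2*h*J) ^ (-(5/4) : ℝ) = (a^5)⁻¹ := by
    rw [← keyn 5]; norm_num
  have e1 : f1 = a⁻¹ := hn1
  have e1' : f1' = (h/2) * (a^5)⁻¹ := by rw [← hn5]
  have hh : h = (1 - a^4) / (2*J) := by
    field_simp; linarith
  have hp4 : 1 + a^4 ≠ 0 := by positivity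
  have hp2 : 1 + a^2 ≠ 0 := by positivity
  have hs : Real.sqrt (1 + h^2 * J^2 * f1^4) = (1 + a^4) / (2 * a^2) := by
    have : 1 + h^2 * J^2 * f1^4 = ((1 + a^4) / (2 * a^2))^2 := by
      rw [e1, hh]; field_simp; ring
    rw [this, Real.sqrt_sq (by positivity)]
  have hd : f1 + 2*J*f1' = (1 + a^4) / (2 * a^5) := by
    rw [e1, e1', hh]; field_simp; ring
  have e2 : f2 = a^2 := by
    change Real.sqrt (1 + h^2 * J^2 * f1^4) * f1 / (f1 + 2*J*f1') = a^2
    rw [hs, hd, e1]; field_simp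
  have ew : w = 2*h*a / (1 + a^2) := by
    change (1 - f2) / (J * f1) = _
    rw [e2, e1, hh]; field_simp; ring
  rw [h2, hn2, hn1, ← ha]
  refine ⟨?_, e2, ?_, ew, ?_⟩
  · rw [hs, e1, hh]; field_simp; ring
  · change 1 / f1 = a
    rw [e1]; simp
  · change -(1/4) * w + (1/2) * (f1' / f1^2) * f2 = _
    rw [ew, e1', e1, e2]; field_simp; ring
end

section
/- Let h be real and J real with |hJ| < 2 and J ≠ 0, and set f1 = (1 - h²J²/4)^(-1/2). Then: (i) hJ·f1² + sqrt(1 + h²J²f1⁴) = (1 + hJ/2)/(1 - hJ/2) = exp(2·arctanh(hJ/2)); (ii) the solution formulas give f2 := sqrt(1 + h²J²f1⁴)·f1/(f1 + 2J·f1') = 1 (where f1' = (h²J/4)(1 - h²J²/4)^(-3/2)), f3 := 1/f1 = (1 - h²J²/4)^(1/2), w := (1 - f2)/(J·f1) = 0, and u := -(1/4)w + (1/2)(f1'/f1²)f2 = (h²J/8)(1 - h²J²/4)^(-1/2). (This is the second deformation map of U_h(osp(2/1)), for which H = J0.) -/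
/-- The second deformation map of `U_h(osp(2/1))` (for which `H = J0`): for
`f1 = (1 - h²J²/4)^(-1/2)` the quantity `T = hJ·f1² + √(1 + h²J²f1⁴)` equals
`(1 + hJ/2)/(1 - hJ/2) = exp(2·arctanh(hJ/2))`, and the solution formulas give
`f2 = 1`, `f3 = (1 - h²J²/4)^(1/2)`, `w = 0`, `u = (h²J/8)(1 - h²J²/4)^(-1/2)`. -/
theorem stmt_11 (h J : ℝ) (hb : |h*J| < 2) (hJ : J ≠ 0) :
    let f1 : ℝ := (1 - h^2*J^2/4) ^ (-(1/2) : ℝ)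
    let f1' : ℝ := (h^2*J/4) * (1 - h^2*J^2/4) ^ (-(3/2) : ℝ)
    let f2 : ℝ := Real.sqrt (1 + h^2 * J^2 * f1^4) * f1 / (f1 + 2*J*f1')
    let f3 : ℝ := 1 / f1
    let w : ℝ := (1 - f2) / (J * f1)
    let u : ℝ := -(1/4) * w + (1/2) * (f1' / f1^2) * f2
    h*J*f1^2 + Real.sqrt (1 + h^2 * J^2 * f1^4) = (1 + h*J/2) / (1 - h*J/2) ∧
    -- `arctanh x = (1/2)·log((1+x)/(1-x))`, so `2·arctanh(hJ/2) = log((1+hJ/2)/(1-hJ/2))`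
    (1 + h*J/2) / (1 - h*J/2)
      = Real.exp (2 * ((1/2) * Real.log ((1 + h*J/2) / (1 - h*J/2)))) ∧
    f2 = 1 ∧
    f3 = (1 - h^2*J^2/4) ^ ((1/2) : ℝ) ∧
    w = 0 ∧
    u = (h^2*J/8) * (1 - h^2*J^2/4) ^ (-(1/2) : ℝ) := by
  obtain ⟨hb1, hb2⟩ := abs_lt.mp hb
  have hp : 0 < 1 + h*J/2 := by linarith
  have hm : 0 < 1 - h*J/2 := by linarith
  have hD : 0 < 1 - h^2*J^2/4 := by
    have := mul_pos hp hm
    nlinarith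
  intro f1 f1' f2 f3 w u
  have hs : 0 < f1 := Real.rpow_pos_of_pos hD _
  have hsD : f1^2 * (1 - h^2*J^2/4) = 1 := by
    have e : f1^2 = (1 - h^2*J^2/4)⁻¹ := by
      rw [← Real.rpow_neg_one, ← Real.rpow_natCast, ← Real.rpow_mul hD.le]
      norm_num
    rw [e, inv_mul_cancel₀ hD.ne']
  have h3 : (1 - h^2*J^2/4) ^ (-(3/2) : ℝ) = f1^3 := by
    rw [← Real.rpow_natCast f1 3, ← Real.rpow_mul hD.le]
    norm_num
  have hf1' : f1' = (h^2*J/4) * f1^3 := by rw [← h3]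
  have hsq : Real.sqrt (1 + h^2 * J^2 * f1^4) = (1 + h^2*J^2/4) * f1^2 := by
    rw [Real.sqrt_eq_iff_mul_self_eq_of_pos (by positivity)]
    linear_combination (f1^2 * (1 - h^2*J^2/4) + 1) * hsD
  have hden : f1 + 2*J*f1' = (1 + h^2*J^2/4) * f1^3 := by
    rw [hf1']
    linear_combination (-f1) * hsD
  have hf2 : f2 = 1 := by
    have : f2 = Real.sqrt (1 + h^2 * J^2 * f1^4) * f1 / (f1 + 2*J*f1') := rfl
    rw [this, hden, hsq, div_eq_one_iff_eq (by positivity)]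
    ring
  have hw : w = 0 := by
    have : w = (1 - f2) / (J * f1) := rfl
    rw [this, hf2]
    simp
  refine ⟨?_, ?_, hf2, ?_, hw, ?_⟩
  · rw [hsq, eq_div_iff hm.ne']
    linear_combination (1 + h*J/2) * hsD
  · rw [← mul_assoc]
    norm_num
    rw [Real.exp_log (div_pos hp hm)]
  · change 1 / f1 = _
    rw [one_div, ← Real.rpow_neg hD.le]
    norm_num
  · change -(1/4) * w + (1/2) * (f1' / f1^2) * f2 = (h^2*J/8) * f1
    rw [hw, hf2, hf1']
    field_simp
    ring
end

section
/- Let h be real and let X, V+, H, V-, Y be the 5×5 real matrices of the adjoint representation of U_h(osp(2/1)) by the second deformation map: X = -E13 + E24 + 2E35, V+ = (1/2)E12 - (1/2)E23 - (1/2)E34 - E45, H = diag(1, 1/2, 0, -1/2, -1), V- = -(h²/16)E14 - E21 - (h²/8)E25 - (1/2)E32 + (1/2)E43 - (1/2)E54, Y = (h²/8)E13 - (h²/2)E24 - 2E31 - (h²/4)E35 + E42 + E53, and set T^α = I + αhX + (α²h²/2)X² (valid since X³ = 0), T = T^1. Define t_{1/2} = V+T^(-3/2), t_1 = T^(-1)X,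 t_0 = HT^(-1) + (3h/4)T^(-1)X, t_{-1/2} = V-T^(1/2) + 2hHV+T^(-1/2) + (h²/2)V+T^(-1/2)X, t_{-1} = YT + 2hH² - 2hV-V+T + hH((I + (h²/2)X²) + T^(-1)) + (h²/8)(5T^(-1)X - 3hX²), and τ_{-1/2} = V-T^(1/2) + 2hHV+T^(-1/2) + (h/2)V+T^(-1/2)(hX - T^(-1)), τ_{-1} = YT + 2hH² - 2hV-V+T + h²HX - (3h²/8)X. Then τ_{-1/2} = t_{-1/2} - (h/2)t_{1/2} and τ_{-1} = t_{-1} - 2h·t_0 + (h²/2)·t_1. -/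
open Matrix

/-- The relation between the two families of tensor operators for the adjoint
representation of `U_h(osp(2/1))` (written with the second-deformation-map matrices):
`τ_{-1/2} = t_{-1/2} - (h/2)t_{1/2}` and `τ_{-1} = t_{-1} - 2h·t_0 + (h²/2)t_1`. -/
theorem stmt_18 (h : ℝ) (X Vp H Vm Y : Matrix (Fin 5) (Fin 5) ℝ)
    (hX : X = !![0, 0, -1, 0, 0;
                 0, 0, 0, 1, 0;
                 0, 0, 0, 0, 2;
                 0, 0, 0, 0, 0;
                 0, 0, 0, 0, 0])
    (hVp : Vp = !![0, 1/2, 0, 0, 0;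
                   0, 0, -(1/2), 0, 0;
                   0, 0, 0, -(1/2), 0;
                   0, 0, 0, 0, -1;
                   0, 0, 0, 0, 0])
    (hH : H = !![1, 0, 0, 0, 0;
                 0, 1/2, 0, 0, 0;
                 0, 0, 0, 0, 0;
                 0, 0, 0, -(1/2), 0;
                 0, 0, 0, 0, -1])
    (hVm : Vm = !![0, 0, 0, -(h^2/16), 0;
                   -1, 0, 0, 0, -(h^2/8);
                   0, -(1/2), 0, 0, 0;
                   0, 0, 1/2, 0, 0;
                   0, 0, 0, -(1/2), 0])
    (hY : Y = !![0, 0, h^2/8, 0, 0;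
                 0, 0, 0, -(h^2/2), 0;
                 -2, 0, 0, 0, -(h^2/4);
                 0, 1, 0, 0, 0;
                 0, 0, 1, 0, 0]) :
    -- `T^α = I + αhX + (α²h²/2)X²` (valid since `X³ = 0`)
    let Tp : ℝ → Matrix (Fin 5) (Fin 5) ℝ :=
      fun α => 1 + (α * h) • X + ((α^2 * h^2) / 2) • (X * X)
    let T := Tp 1
    let Tm1 := Tp (-1)
    let Th := Tp (1/2)
    let Tmh := Tp (-(1/2))
    let Tm3h := Tp (-(3/2))
    -- the tensor operators of the first form
    let t12 := Vp * Tm3h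
    let t1 := Tm1 * X
    let t0 := H * Tm1 + (3*h/4) • (Tm1 * X)
    let tm12 := Vm * Th + (2*h) • (H * Vp * Tmh) + (h^2/2) • (Vp * Tmh * X)
    let tm1 := Y * T + (2*h) • (H * H) - (2*h) • (Vm * Vp * T)
      + h • (H * ((1 + (h^2/2) • (X * X)) + Tm1))
      + (h^2/8) • ((5 : ℝ) • (Tm1 * X) - (3*h) • (X * X))
    -- the tensor operators of the second form
    let τm12 := Vm * Th + (2*h) • (H * Vp * Tmh) + (h/2) • (Vp * Tmh * (h • X - Tm1))
    let τm1 := Y * T + (2*h) • (H * H) - (2*h) • (Vm * Vp * T) + h^2 • (H * X)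
      - (3*h^2/8) • X
    τm12 = tm12 - (h/2) • t12 ∧
    τm1 = tm1 - (2*h) • t0 + (h^2/2) • t1 := by
  have h3 : X * (X * X) = 0 := by
    rw [hX]
    ext i j
    fin_cases i <;> fin_cases j <;> simp [Matrix.mul_apply, Fin.sum_univ_five]
  clear hX hVp hH hVm hY
  intro Tp T Tm1 Th Tmh Tm3h t12 t1 t0 tm12 tm1 τm12 τm1
  simp only [τm12, τm1, tm12, tm1, t12, t1, t0, T, Tm1, Th, Tmh, Tm3h, Tp]
  constructor
  · simp only [mul_add, add_mul, mul_sub, sub_mul, mul_one, one_mul, Matrix.smul_mul,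
      Matrix.mul_smul, Matrix.mul_assoc, h3, Matrix.mul_zero, smul_zero]
    module
  · simp only [mul_add, add_mul, mul_sub, sub_mul, mul_one, one_mul, Matrix.smul_mul,
      Matrix.mul_smul, Matrix.mul_assoc, h3, Matrix.mul_zero, smul_zero]
    module
end
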